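/- The Mordell–Weil group E(ℚ) of the elliptic curve E over ℚ defined by y² = x³ − 60x + 176 (LMFDB label 576.e2) is isomorphic, as an abelian group, to ℤ × ℤ/2ℤ. -/

import Mathlib

/-- The elliptic curve over `ℚ` with LMFDB label 576.e2, `y² = x³ − 60x + 176`. -/
noncomputable def E576e2 : WeierstrassCurve.Affine ℚ :=
  { a₁ := 0, a₂ := 0, a₃ := 0, a₄ := -60, a₆ := 176 }


theorem int_sqclass (u v M : ℤ) (hu : u ≠ 0) (h : u * v = M ^ 2) :
    ∃ g k : ℤ, u = g * k ^ 2 ∧ k ≠ 0 ∧ Squarefree g ∧ g ∣ v := by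
  obtain ⟨g, k, hgk, hg⟩ := Nat.sq_mul_squarefree u.natAbs
  have key : ∃ g' : ℤ, g'.natAbs = g ∧ u = g' * (k : ℤ) ^ 2 := by
    rcases Int.natAbs_eq u with h1 | h1
    · refine ⟨g, by simp, ?_⟩
      rw [h1, ← hgk]; push_cast; ring
    · refine ⟨-g, by simp, ?_⟩
      rw [h1, ← hgk]; push_cast; ring
  obtain ⟨g', hg', hu'⟩ := key
  have hk : (k : ℤ) ≠ 0 := by
    intro hk; rw [hk] at hu'; apply hu; rw [hu']; ring
  have hsf : Squarefree g' := by
    rw [← Int.squarefree_natAbs, hg']; exact hg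
  refine ⟨g', k, hu', hk, hsf, ?_⟩
  have h1 : (k : ℤ) ^ 2 ∣ M ^ 2 := ⟨g' * v, by rw [← h, hu']; ring⟩
  rw [Int.pow_dvd_pow_iff (by norm_num)] at h1
  obtain ⟨m, rfl⟩ := h1
  have h2 : g' * v = m ^ 2 := by
    have : (k : ℤ) ^ 2 * (g' * v) = (k : ℤ) ^ 2 * m ^ 2 := by
      rw [hu'] at h; linear_combination h
    exact mul_left_cancel₀ (pow_ne_zero 2 hk) this
  have h3 : g' ∣ m := (hsf.dvd_pow_iff_dvd (by norm_num)).1 ⟨v, h2.symm⟩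
  obtain ⟨l, rfl⟩ := h3
  have hg0 : g' ≠ 0 := hsf.ne_zero
  refine ⟨l ^ 2, mul_left_cancel₀ hg0 ?_⟩
  rw [h2]; ring

theorem int_of_sq (z : ℚ) (A : ℤ) (h : z ^ 2 = A) : ∃ N : ℤ, z = N := by
  have h1 : IsSquare ((A : ℤ) : ℚ) := ⟨z, by rw [← h]; ring⟩
  rw [Rat.isSquare_intCast_iff] at h1
  obtain ⟨r, rfl⟩ := h1
  have : z ^ 2 = (r : ℚ) ^ 2 := by rw [h]; push_cast; ring
  rcases sq_eq_sq_iff_eq_or_eq_neg.1 this with h | h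
  · exact ⟨r, h⟩
  · exact ⟨-r, by simp [h]⟩

theorem rat_repr (X : ℚ) : ∃ n d : ℤ, 0 < d ∧ IsCoprime n d ∧ X = n / d ∧ n = X.num ∧ d = X.den := by
  refine ⟨X.num, X.den, by exact_mod_cast X.den_pos, ?_, (Rat.num_div_den X).symm, rfl, rfl⟩
  rw [Int.isCoprime_iff_gcd_eq_one]
  exact X.reduced

theorem rat_sqclass (a b : ℤ) (X y : ℚ) (hX : X ≠ 0) (h : y ^ 2 = X * (X ^ 2 + a * X + b)) :
    ∃ (g : ℤ) (t : ℚ), t ≠ 0 ∧ Squarefree g ∧ g ∣ b ∧ X = g * t ^ 2 := by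
  obtain ⟨n, d, hd, hc, hXe, -, -⟩ := rat_repr X
  have hd' : (d : ℚ) ≠ 0 := by exact_mod_cast hd.ne'
  have hn : n ≠ 0 := by
    rintro rfl; apply hX; rw [hXe]; simp
  have h1 : (y * d ^ 2) ^ 2 = ((n * d) * (n ^ 2 + a * n * d + b * d ^ 2) : ℤ) := by
    rw [mul_pow, h, hXe]; push_cast; field_simp
  obtain ⟨M, hM⟩ := int_of_sq _ _ h1
  rw [hM] at h1
  have h2 : (n * d) * (n ^ 2 + a * n * d + b * d ^ 2) = M ^ 2 := by exact_mod_cast h1.symm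
  obtain ⟨g, k, hu, hk, hsf, hgv⟩ := int_sqclass _ _ _ (mul_ne_zero hn hd.ne') h2
  have hk' : (k : ℚ) ≠ 0 := by exact_mod_cast hk
  refine ⟨g, k / d, div_ne_zero hk' hd', hsf, ?_, ?_⟩
  · have hgu : g ∣ n * d := ⟨k ^ 2, hu⟩
    have hcv : IsCoprime (n ^ 2 + a * n * d + b * d ^ 2) d := by
      have : IsCoprime (n ^ 2) d := hc.pow_left
      have h3 := this.add_mul_right_left (a * n + b * d)
      have h4 : n ^ 2 + a * n * d + b * d ^ 2 = n ^ 2 + (a * n + b * d) * d := by ring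
      rw [h4]; exact h3
    have hgd : IsCoprime g d := hcv.of_isCoprime_of_dvd_left hgv
    have hgn : g ∣ n := hgd.dvd_of_dvd_mul_right hgu
    have : g ∣ b * d ^ 2 := by
      have h4 : b * d ^ 2 = (n ^ 2 + a * n * d + b * d ^ 2) - n * (n + a * d) := by ring
      rw [h4]; exact dvd_sub hgv (hgn.mul_right _)
    exact hgd.pow_right.dvd_of_dvd_mul_right this
  · have hu' : (n : ℚ) * d = g * k ^ 2 := by exact_mod_cast hu
    rw [hXe, div_pow, div_eq_iff hd']
    field_simp
    linear_combination hu'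

theorem quartic_int (A B C : ℤ) (t z : ℚ) (h : z ^ 2 = A * t ^ 4 + B * t ^ 2 + C) :
    ∃ M e N : ℤ, IsCoprime M e ∧ N ^ 2 = A * M ^ 4 + B * M ^ 2 * e ^ 2 + C * e ^ 4 := by
  obtain ⟨n, d, hd, hc, hXe, -, -⟩ := rat_repr t
  have hd' : (d : ℚ) ≠ 0 := by exact_mod_cast hd.ne'
  have h1 : (z * d ^ 2) ^ 2 = (A * n ^ 4 + B * n ^ 2 * d ^ 2 + C * d ^ 4 : ℤ) := by
    rw [mul_pow, h, hXe]; push_cast; field_simp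
  obtain ⟨N, hN⟩ := int_of_sq _ _ h1
  rw [hN] at h1
  exact ⟨n, d, N, hc, by exact_mod_cast h1⟩

theorem not_both (p M e : ℤ) (hp : 1 < p) (h : IsCoprime M e) (h1 : p ∣ M) (h2 : p ∣ e) : False := by
  have := h.isUnit_of_dvd' h1 h2
  rcases Int.isUnit_iff.1 this with h | h <;> omega

theorem dvd3_of_zmod9 (M : ℤ) (h : (3 * M : ZMod 9) = 0) : 3 ∣ M := by
  have : ((3 * M : ℤ) : ZMod 9) = 0 := by push_cast; exact h
  rw [ZMod.intCast_zmod_eq_zero_iff_dvd] at this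
  omega

theorem mod9_contra (A B C : ℤ)
    (hd : ∀ N M e : ZMod 9, N ^ 2 = A * M ^ 4 + B * M ^ 2 * e ^ 2 + C * e ^ 4 → 3 * M = 0 ∧ 3 * e = 0)
    (t z : ℚ) (h : z ^ 2 = A * t ^ 4 + B * t ^ 2 + C) : False := by
  obtain ⟨M, e, N, hc, hN⟩ := quartic_int A B C t z h
  have h1 : ((N ^ 2 : ℤ) : ZMod 9) = ((A * M ^ 4 + B * M ^ 2 * e ^ 2 + C * e ^ 4 : ℤ) : ZMod 9) := by
    rw [hN]
  push_cast at h1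
  obtain ⟨h2, h3⟩ := hd _ _ _ h1
  exact not_both 3 M e (by norm_num) hc (dvd3_of_zmod9 _ h2) (dvd3_of_zmod9 _ h3)

theorem sq_even {N k : ℤ} (h : N ^ 2 = 2 * k) : ∃ a, N = 2 * a := by
  have : Even (N ^ 2) := ⟨k, by omega⟩
  rw [Int.even_pow' (by norm_num)] at this
  obtain ⟨a, ha⟩ := this
  exact ⟨a, by omega⟩

theorem sq_ne_32_odd (N o : ℤ) (h : N ^ 2 = 32 * o) (ho : o % 2 = 1) : False := by
  obtain ⟨a, rfl⟩ := sq_even (k := 16 * o) (by rw [h]; ring)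
  obtain ⟨b, rfl⟩ := sq_even (N := a) (k := 4 * o) (by linarith)
  obtain ⟨c, rfl⟩ := sq_even (N := b) (k := o) (by linarith)
  have : o = 2 * c ^ 2 := by linarith
  omega

theorem excl2 (t z : ℚ) (h : z ^ 2 = 2 * t ^ 4 - 24 * t ^ 2 + 96) : False := by
  obtain ⟨M, e, N, hc, hN⟩ := quartic_int 2 (-24) 96 t z (by rw [h]; push_cast; ring)
  obtain ⟨a, rfl⟩ := sq_even (N := N) (k := M ^ 4 - 12 * M ^ 2 * e ^ 2 + 48 * e ^ 4) (by rw [hN]; ring)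
  obtain ⟨m', hm'⟩ := sq_even (N := M ^ 2) (k := a ^ 2 + 6 * M ^ 2 * e ^ 2 - 24 * e ^ 4) (by linarith)
  obtain ⟨m, rfl⟩ := sq_even hm'
  rcases Int.even_or_odd e with he | he
  · exact not_both 2 _ e (by norm_num) hc (by simp) he.two_dvd
  apply sq_ne_32_odd (2 * a) (m ^ 4 - 3 * m ^ 2 * e ^ 2 + 3 * e ^ 4) (by rw [hN]; ring)
  rw [← Int.odd_iff]
  rcases Int.even_or_odd m with hm | hm <;> simp [Int.even_pow, Int.even_add, Int.even_sub, Int.even_mul, hm, parity_simps, ← Int.not_even_iff_odd] <;> simp_all [← Int.not_even_iff_odd] <;> decide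

theorem excl6 (t z : ℚ) (h : z ^ 2 = 6 * t ^ 4 - 24 * t ^ 2 + 32) : False := by
  obtain ⟨M, e, N, hc, hN⟩ := quartic_int 6 (-24) 32 t z (by rw [h]; push_cast; ring)
  obtain ⟨a, rfl⟩ := sq_even (N := N) (k := 3 * M ^ 4 - 12 * M ^ 2 * e ^ 2 + 16 * e ^ 4) (by rw [hN]; ring)
  obtain ⟨m', hm'⟩ := sq_even (N := M ^ 2) (k := a ^ 2 - M ^ 4 + 6 * M ^ 2 * e ^ 2 - 8 * e ^ 4) (by linarith)
  obtain ⟨m, rfl⟩ := sq_even hm'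
  rcases Int.even_or_odd e with he | he
  · exact not_both 2 _ e (by norm_num) hc (by simp) he.two_dvd
  apply sq_ne_32_odd (2 * a) (3 * m ^ 4 - 3 * m ^ 2 * e ^ 2 + e ^ 4) (by rw [hN]; ring)
  rw [← Int.odd_iff]
  rcases Int.even_or_odd m with hm | hm <;> simp [Int.even_pow, Int.even_add, Int.even_sub, Int.even_mul, hm, parity_simps, ← Int.not_even_iff_odd] <;> simp_all [← Int.not_even_iff_odd]

theorem sqfree_cases (g : ℤ) (h : Squarefree g) (hd : g ∣ 192) :
    g = 1 ∨ g = -1 ∨ g = 2 ∨ g = -2 ∨ g = 3 ∨ g = -3 ∨ g = 6 ∨ g = -6 := by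
  have h6 : g ∣ 6 := by
    have : g ∣ 6 ^ 6 := hd.trans (by norm_num)
    exact (h.dvd_pow_iff_dvd (by norm_num)).1 this
  have h1 : g ≤ 6 := Int.le_of_dvd (by norm_num) h6
  have h2 : -g ≤ 6 := Int.le_of_dvd (by norm_num) (by simpa using h6)
  have h3 : -6 ≤ g := by linarith
  interval_cases g <;> first | (simp; done) | (exfalso; revert h6; decide)

/-- Descent for the curve itself. -/
theorem class_E (X y : ℚ) (hX : X ≠ 0) (h : y ^ 2 = X * (X ^ 2 + 12 * X - 12)) :
    ∃ t : ℚ, t ≠ 0 ∧ (X = t ^ 2 ∨ X = -3 * t ^ 2 ∨ X = 6 * t ^ 2 ∨ X = -2 * t ^ 2) := by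
  obtain ⟨g, t, ht, hsf, hg, hXe⟩ := rat_sqclass 12 (-12) X y hX (by rw [h]; push_cast; ring)
  refine ⟨t, ht, ?_⟩
  rcases sqfree_cases g hsf (hg.trans (by norm_num)) with rfl | rfl | rfl | rfl | rfl | rfl | rfl | rfl
  · left; rw [hXe]; push_cast; ring
  · exfalso
    refine mod9_contra (-1) 12 12 (by decide +kernel) t (y / t) ?_
    rw [div_pow, h, hXe]; push_cast; field_simp; ring
  · exfalso
    refine mod9_contra 2 12 (-6) (by decide +kernel) t (y / (2 * t)) ?_
    rw [div_pow, h, hXe]; push_cast; field_simp; ring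
  · right; right; right; rw [hXe]; push_cast; ring
  · exfalso
    refine mod9_contra 3 12 (-4) (by decide +kernel) t (y / (3 * t)) ?_
    rw [div_pow, h, hXe]; push_cast; field_simp; ring
  · right; left; rw [hXe]; push_cast; ring
  · right; right; left; rw [hXe]; push_cast; ring
  · exfalso
    refine mod9_contra (-6) 12 2 (by decide +kernel) t (y / (6 * t)) ?_
    rw [div_pow, h, hXe]; push_cast; field_simp; ring

/-- Descent for the isogenous curve. -/
theorem class_E' (X y : ℚ) (hX : X ≠ 0) (h : y ^ 2 = X * (X ^ 2 - 24 * X + 192)) :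
    ∃ t : ℚ, t ≠ 0 ∧ (X = t ^ 2 ∨ X = 3 * t ^ 2) := by
  obtain ⟨g, t, ht, hsf, hg, hXe⟩ := rat_sqclass (-24) 192 X y hX (by rw [h]; push_cast; ring)
  refine ⟨t, ht, ?_⟩
  have hpos : 0 ≤ X := by
    by_contra hneg
    have h1 : 0 < X ^ 2 - 24 * X + 192 := by nlinarith [sq_nonneg (X - 12)]
    have h2 : X * (X ^ 2 - 24 * X + 192) < 0 := mul_neg_of_neg_of_pos (by linarith) h1
    nlinarith [sq_nonneg y]
  have ht2 : 0 < t ^ 2 := by positivity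
  rcases sqfree_cases g hsf hg with rfl | rfl | rfl | rfl | rfl | rfl | rfl | rfl
  · left; rw [hXe]; push_cast; ring
  · push_cast at hXe; exfalso; linarith
  · exfalso
    refine excl2 t (y / (2 * t)) ?_
    rw [div_pow, h, hXe]; push_cast; field_simp; ring
  · push_cast at hXe; exfalso; linarith
  · right; rw [hXe]; push_cast; ring
  · push_cast at hXe; exfalso; linarith
  · exfalso
    refine excl6 t (y / (6 * t)) ?_
    rw [div_pow, h, hXe]; push_cast; field_simp; ring
  · push_cast at hXe; exfalso; linarith

/-- y = 0 happens only for `X = 0`. -/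
theorem y_zero {X : ℚ} (h : X * (X ^ 2 + 12 * X - 12) = 0) : X = 0 := by
  rcases mul_eq_zero.1 h with h | h
  · exact h
  · exfalso
    have h1 : (X + 6) ^ 2 = ((48 : ℤ) : ℚ) := by push_cast; linear_combination h
    obtain ⟨N, hN⟩ := int_of_sq _ _ h1
    rw [hN] at h1
    have h2 : N ^ 2 = 48 := by exact_mod_cast h1
    have h3 : N ≤ 7 := by nlinarith
    have h4 : -7 ≤ N := by nlinarith
    interval_cases N <;> omega

/-- `P` is the affine point with shifted coordinates `(X, y)`, i.e. `x = X + 4`. -/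
def IsPt (P : E576e2.Point) (X y : ℚ) : Prop :=
  ∃ h : E576e2.Nonsingular (X + 4) y, P = WeierstrassCurve.Affine.Point.some (X + 4) y h

theorem nonsing_iff (X y : ℚ) :
    E576e2.Nonsingular (X + 4) y ↔ y ^ 2 = X * (X ^ 2 + 12 * X - 12) := by
  rw [WeierstrassCurve.Affine.nonsingular_iff, WeierstrassCurve.Affine.equation_iff]
  simp only [E576e2]
  constructor
  · rintro ⟨h, -⟩
    linear_combination h
  · intro h
    refine ⟨by linear_combination h, ?_⟩
    by_contra hcon
    push Not at hcon
    obtain ⟨h1, h2⟩ := hcon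
    have hy : y = 0 := by linarith
    subst hy
    have h3 : X * (X ^ 2 + 12 * X - 12) = 0 := by linarith
    have h4 : 3 * X ^ 2 + 24 * X - 12 = 0 := by linarith
    have h5 := y_zero h3
    subst h5
    norm_num at h4

theorem IsPt.eqn {P : E576e2.Point} {X y : ℚ} (h : IsPt P X y) : y ^ 2 = X * (X ^ 2 + 12 * X - 12) := by
  obtain ⟨h, -⟩ := h
  exact (nonsing_iff X y).1 h

theorem exists_pt {X y : ℚ} (h : y ^ 2 = X * (X ^ 2 + 12 * X - 12)) : ∃ P, IsPt P X y :=
  ⟨_, (nonsing_iff X y).2 h, rfl⟩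

theorem pt_cases (P : E576e2.Point) : P = 0 ∨ ∃ X y, IsPt P X y := by
  rcases P with _ | ⟨x, y, h⟩
  · left; rfl
  · right
    refine ⟨x - 4, y, by rw [sub_add_cancel]; exact h, ?_⟩
    simp

theorem IsPt.ne_zero {P : E576e2.Point} {X y : ℚ} (h : IsPt P X y) : P ≠ 0 := by
  obtain ⟨h, rfl⟩ := h
  exact WeierstrassCurve.Affine.Point.some_ne_zero h

theorem IsPt.unique {P : E576e2.Point} {X y : ℚ} {Q : E576e2.Point} (h : IsPt P X y) (h' : IsPt Q X y) :
    P = Q := by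
  obtain ⟨h, rfl⟩ := h
  obtain ⟨h', rfl⟩ := h'
  rfl

theorem IsPt.inj {P : E576e2.Point} {X y X' y' : ℚ} (h : IsPt P X y) (h' : IsPt P X' y') :
    X = X' ∧ y = y' := by
  obtain ⟨h, rfl⟩ := h
  obtain ⟨h', he⟩ := h'
  simpa using he

theorem IsPt.neg {P : E576e2.Point} {X y : ℚ} (h : IsPt P X y) : IsPt (-P) X (-y) := by
  have h2 := h.eqn
  obtain ⟨h, rfl⟩ := h
  refine ⟨(nonsing_iff X (-y)).2 (by rw [neg_sq]; exact h2), ?_⟩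
  rw [WeierstrassCurve.Affine.Point.neg_some]
  simp [WeierstrassCurve.Affine.negY, E576e2]

theorem IsPt.add {P Q : E576e2.Point} {X y X' y' m : ℚ} (h : IsPt P X y) (h' : IsPt Q X' y')
    (hne : X ≠ X') (hm : m * (X - X') = y - y') :
    IsPt (P + Q) (m ^ 2 - 12 - X - X') (-(m * (m ^ 2 - 12 - X - X' - X) + y)) := by
  obtain ⟨h, rfl⟩ := h
  obtain ⟨h', rfl⟩ := h'
  have hne4 : X + 4 ≠ X' + 4 := by simpa using hne
  have hs : E576e2.slope (X + 4) (X' + 4) y y' = m := by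
    rw [WeierstrassCurve.Affine.slope_of_X_ne hne4, div_eq_iff (sub_ne_zero.2 hne4)]
    linear_combination -hm
  have e1 : E576e2.addX (X + 4) (X' + 4) m = m ^ 2 - 12 - X - X' + 4 := by
    simp [WeierstrassCurve.Affine.addX, E576e2]; ring
  have e2 : E576e2.addY (X + 4) (X' + 4) y m = -(m * (m ^ 2 - 12 - X - X' - X) + y) := by
    simp only [WeierstrassCurve.Affine.addY, WeierstrassCurve.Affine.negAddY,
      WeierstrassCurve.Affine.negY, WeierstrassCurve.Affine.addX, E576e2]; ring
  have key := WeierstrassCurve.Affine.Point.add_of_X_ne (h₁ := h) (h₂ := h') hne4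
  have hn := WeierstrassCurve.Affine.nonsingular_add h h' (fun hc => hne4 hc.1)
  rw [hs, e1, e2] at hn
  refine ⟨hn, ?_⟩
  rw [key]
  simp only [hs, e1, e2]

theorem IsPt.dbl {P : E576e2.Point} {X y m : ℚ} (h : IsPt P X y)
    (hy : y ≠ 0) (hm : m * (2 * y) = 3 * X ^ 2 + 24 * X - 12) :
    IsPt (P + P) (m ^ 2 - 12 - X - X) (-(m * (m ^ 2 - 12 - X - X - X) + y)) := by
  obtain ⟨h, rfl⟩ := h
  have hne : y ≠ E576e2.negY (X + 4) y := by
    simp only [WeierstrassCurve.Affine.negY, E576e2]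
    intro hc; apply hy; linarith
  have hs : E576e2.slope (X + 4) (X + 4) y y = m := by
    rw [WeierstrassCurve.Affine.slope_of_Y_ne rfl hne, div_eq_iff (sub_ne_zero.2 hne)]
    simp only [WeierstrassCurve.Affine.negY, E576e2]
    linear_combination -hm
  have e1 : E576e2.addX (X + 4) (X + 4) m = m ^ 2 - 12 - X - X + 4 := by
    simp [WeierstrassCurve.Affine.addX, E576e2]; ring
  have e2 : E576e2.addY (X + 4) (X + 4) y m = -(m * (m ^ 2 - 12 - X - X - X) + y) := by
    simp only [WeierstrassCurve.Affine.addY, WeierstrassCurve.Affine.negAddY,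
      WeierstrassCurve.Affine.negY, WeierstrassCurve.Affine.addX, E576e2]; ring
  have key := WeierstrassCurve.Affine.Point.add_self_of_Y_ne (h₁ := h) hne
  have hn := WeierstrassCurve.Affine.nonsingular_add h h (fun hc => hne hc.2)
  rw [hs, e1, e2] at hn
  refine ⟨hn, ?_⟩
  rw [key]
  simp only [hs, e1, e2]

theorem IsPt.dbl_zero {P : E576e2.Point} {X : ℚ} (h : IsPt P X 0) : P + P = 0 := by
  have := h.neg
  rw [neg_zero] at this
  have h2 := h.unique this
  nth_rewrite 2 [h2]
  simp

/-- X-coordinates determine points up to sign. -/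
theorem IsPt.eq_or_neg {P Q : E576e2.Point} {X y y' : ℚ} (h : IsPt P X y) (h' : IsPt Q X y') :
    P = Q ∨ P = -Q := by
  have : y ^ 2 = y' ^ 2 := by rw [h.eqn, h'.eqn]
  rcases sq_eq_sq_iff_eq_or_eq_neg.1 this with rfl | rfl
  · left; exact h.unique h'
  · right; exact h.unique h'.neg

noncomputable def T : E576e2.Point := (exists_pt (X := 0) (y := 0) (by norm_num)).choose
theorem hT : IsPt T 0 0 := (exists_pt (X := 0) (y := 0) (by norm_num)).choose_spec
noncomputable def G : E576e2.Point := (exists_pt (X := -2) (y := 8) (by norm_num)).choose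
theorem hG : IsPt G (-2) 8 := (exists_pt (X := -2) (y := 8) (by norm_num)).choose_spec

theorem TT : T + T = 0 := hT.dbl_zero

theorem hGT : IsPt (G + T) 6 24 := by
  have := hG.add hT (m := -4) (by norm_num) (by norm_num)
  norm_num at this
  exact this

theorem hGG : IsPt (G + G) 1 1 := by
  have := hG.dbl (m := -3) (by norm_num) (by norm_num)
  norm_num at this
  exact this

theorem IsPt.addT {P : E576e2.Point} {X y : ℚ} (h : IsPt P X y) (hX : X ≠ 0) :
    ∃ y', IsPt (P + T) (-12 / X) y' := by
  have h1 := h.add hT (m := y / X) hX (by field_simp; ring)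
  have h2 : (y / X) ^ 2 - 12 - X - 0 = -12 / X := by
    rw [div_pow, h.eqn]; field_simp; ring
  rw [h2] at h1
  exact ⟨_, h1⟩

theorem two_tors {P : E576e2.Point} (h : P + P = 0) : P = 0 ∨ P = T := by
  rcases pt_cases P with h0 | ⟨X, y, hP⟩
  · left; exact h0
  right
  by_cases hy : y = 0
  · subst hy
    have := y_zero (X := X) (by rw [← hP.eqn]; norm_num)
    subst this
    exact hP.unique hT
  · exfalso
    have := hP.dbl hy (m := (3 * X ^ 2 + 24 * X - 12) / (2 * y)) (by field_simp)
    exact this.ne_zero h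

/-- Doubling formula. -/
theorem dbl_X {P : E576e2.Point} {X y X' y' : ℚ} (h : IsPt P X y) (h' : IsPt (P + P) X' y') :
    y ≠ 0 ∧ X ≠ 0 ∧ X' = ((X ^ 2 + 12) / (2 * y)) ^ 2 := by
  have hy : y ≠ 0 := by
    rintro rfl
    exact h'.ne_zero h.dbl_zero
  have hX : X ≠ 0 := by
    rintro rfl
    have := h.eqn
    apply hy
    simpa using this
  refine ⟨hy, hX, ?_⟩
  have h1 := h.dbl hy (m := (3 * X ^ 2 + 24 * X - 12) / (2 * y)) (by field_simp)
  rw [(h'.inj h1).1]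
  have := h.eqn
  field_simp
  linear_combination (-48 - 8 * X) * this

/-- Halving formula. -/
theorem halve {P : E576e2.Point} {s t w : ℚ} (h : IsPt P (s ^ 2) (s * t)) (hs : s ≠ 0)
    (hw : w ^ 2 = 2 * s ^ 2 + 12 + 2 * t) : ∃ R, P = R + R := by
  have he := h.eqn
  have ht : t ^ 2 = s ^ 4 + 12 * s ^ 2 - 12 := by
    have : s ^ 2 * t ^ 2 = s ^ 2 * (s ^ 4 + 12 * s ^ 2 - 12) := by linear_combination he
    exact mul_left_cancel₀ (pow_ne_zero 2 hs) this
  have hprod : (2 * s ^ 2 + 12 + 2 * t) * (2 * s ^ 2 + 12 - 2 * t) = 192 := by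
    linear_combination -4 * ht
  have hw0 : w ≠ 0 := by
    rintro rfl
    rw [← hw] at hprod
    norm_num at hprod
  have hX0 : (s ^ 2 + t + s * w) * (s ^ 2 + t - s * w) = -12 := by
    linear_combination ht - s ^ 2 * hw
  have hXne : s ^ 2 + t + s * w ≠ 0 := by
    intro hc; rw [hc] at hX0; norm_num at hX0
  obtain ⟨R, hR⟩ := exists_pt (X := s ^ 2 + t + s * w) (y := w * (s ^ 2 + t + s * w)) (by
    linear_combination (s ^ 2 + t + s * w) ^ 2 * hw + (s ^ 2 + t + s * w) * hX0)
  have h1 := hR.dbl (m := w + s) (mul_ne_zero hw0 hXne) (by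
    linear_combination 2 * (s ^ 2 + t + s * w) * hw + hX0)
  refine ⟨R, h.unique ?_⟩
  convert h1 using 1
  · linear_combination -hw
  · linear_combination (w + s) * hw

theorem halve_sq {P : E576e2.Point} {s y : ℚ} (h : IsPt P (s ^ 2) y) (hs : s ≠ 0) :
    ∃ R, P = R + R := by
  obtain ⟨t, rfl⟩ : ∃ t, y = s * t := ⟨y / s, by field_simp⟩
  have he := h.eqn
  have ht : t ^ 2 = s ^ 4 + 12 * s ^ 2 - 12 := by
    have : s ^ 2 * t ^ 2 = s ^ 2 * (s ^ 4 + 12 * s ^ 2 - 12) := by linear_combination he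
    exact mul_left_cancel₀ (pow_ne_zero 2 hs) this
  have hprod : (2 * s ^ 2 + 12 + 2 * t) * (2 * s ^ 2 + 12 - 2 * t) = 192 := by
    linear_combination -4 * ht
  have hz : 2 * s ^ 2 + 12 + 2 * t ≠ 0 := by
    intro hc; rw [hc] at hprod; norm_num at hprod
  obtain ⟨w, hw0, hw | hw⟩ := class_E' (2 * s ^ 2 + 12 + 2 * t) (2 * s * (2 * s ^ 2 + 12 + 2 * t)) hz (by
    linear_combination (2 * s ^ 2 + 12 + 2 * t) * hprod)
  · exact halve h hs hw.symm
  · have h' : IsPt P ((-s) ^ 2) ((-s) * (-t)) := by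
      rw [neg_sq, neg_mul_neg]; exact h
    refine halve (w := 8 / w) h' (neg_ne_zero.2 hs) ?_
    rw [hw] at hprod
    field_simp
    linear_combination (-1 / 3 : ℚ) * hprod

theorem halve_sq' {P : E576e2.Point} {s y : ℚ} (h : IsPt P (s ^ 2) y) :
    ∃ R, P = R + R ∨ P = R + R + T := by
  by_cases hs : s = 0
  · subst hs
    have he := h.eqn
    have : y = 0 := by simpa using he
    subst this
    refine ⟨0, Or.inr ?_⟩
    simp only [add_zero, zero_add]
    refine h.unique ?_
    simpa using hT
  · obtain ⟨R, hR⟩ := halve_sq h hs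
    exact ⟨R, Or.inl hR⟩

theorem weak_neg2 {P : E576e2.Point} {X y t : ℚ} (h : IsPt P X y) (ht : t ≠ 0) (hX : X = -2 * t ^ 2) :
    ∃ R, P = R + R + G ∨ P = R + R + (G + T) := by
  by_cases hX2 : X = -2
  · subst hX2
    rcases h.eq_or_neg hG with rfl | rfl
    · exact ⟨0, by simp⟩
    · exact ⟨-G, by left; abel⟩
  · have hne : X - -2 ≠ 0 := sub_ne_zero.2 hX2
    have h1 := h.add hG (m := (y - 8) / (X - -2)) hX2 (by field_simp)
    have h2 : ((y - 8) / (X - -2)) ^ 2 - 12 - X - -2 =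
        ((y - (y - 8) / (X - -2) * X) / (2 * t)) ^ 2 := by
      have he := h.eqn
      have hX0 : X ≠ 0 := by rw [hX]; simpa using ht
      have e1 : (2 * t) ^ 2 = -2 * X := by rw [hX]; ring
      rw [div_pow _ (2 * t), e1]
      field_simp
      linear_combination (4 + 2 * X) * he
    rw [h2] at h1
    obtain ⟨R, hR | hR⟩ := halve_sq' h1
    · exact ⟨R - G, Or.inl (by rw [eq_sub_of_add_eq hR]; abel)⟩
    · exact ⟨R - G, Or.inr (by rw [eq_sub_of_add_eq hR]; abel)⟩

theorem weak_MW (P : E576e2.Point) :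
    ∃ R, P = R + R ∨ P = R + R + T ∨ P = R + R + G ∨ P = R + R + (G + T) := by
  rcases pt_cases P with rfl | ⟨X, y, h⟩
  · exact ⟨0, by simp⟩
  by_cases hX : X = 0
  · subst hX
    rw [show (0 : ℚ) = 0 ^ 2 by norm_num] at h
    obtain ⟨R, hR⟩ := halve_sq' h
    exact ⟨R, by tauto⟩
  obtain ⟨y', hPT⟩ := h.addT hX
  have hback : P = P + T + T := by rw [add_assoc, TT, add_zero]
  obtain ⟨t, ht, h1 | h1 | h1 | h1⟩ := class_E X y hX h.eqn
  · rw [h1] at h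
    obtain ⟨R, hR⟩ := halve_sq' h
    exact ⟨R, by tauto⟩
  · have : -12 / X = (2 / t) ^ 2 := by rw [h1]; field_simp; norm_num
    rw [this] at hPT
    obtain ⟨R, hR⟩ := halve_sq hPT (by positivity)
    exact ⟨R, Or.inr (Or.inl (by rw [← hR]; exact hback))⟩
  · obtain ⟨R, hR | hR⟩ := weak_neg2 (t := 1 / t) hPT (by positivity) (by rw [h1]; field_simp; norm_num)
    · refine ⟨R, Or.inr (Or.inr (Or.inr ?_))⟩
      rw [hback, hR]; abel
    · refine ⟨R, Or.inr (Or.inr (Or.inl ?_))⟩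
      rw [hback, hR, add_assoc, add_assoc G, TT, add_zero]
  · obtain ⟨R, hR | hR⟩ := weak_neg2 h ht h1
    · exact ⟨R, by tauto⟩
    · exact ⟨R, by tauto⟩

/-- Naive height. -/
def ht (X : ℚ) : ℤ := max |X.num| X.den

theorem ht_pos (X : ℚ) : 1 ≤ ht X := by
  have : (1 : ℤ) ≤ X.den := by exact_mod_cast X.den_pos
  exact this.trans (le_max_right _ _)

theorem ht_spec (X : ℚ) : ∃ n d : ℤ, 0 < d ∧ IsCoprime n d ∧ X = n / d ∧ ht X = max |n| d := by
  obtain ⟨n, d, hd, hc, hX, rfl, rfl⟩ := rat_repr X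
  exact ⟨_, _, hd, hc, hX, rfl⟩

/-- Inverting. -/
theorem ht_inv (X : ℚ) (hX : X ≠ 0) : ht (-12 / X) ≤ 12 * ht X := by
  obtain ⟨n, d, hd, hc, hXe, hh⟩ := ht_spec X
  obtain ⟨N, D, hD, hC, hYe, hH⟩ := ht_spec (-12 / X)
  have hn : n ≠ 0 := by rintro rfl; apply hX; rw [hXe]; simp
  have hn' : (n : ℚ) ≠ 0 := by exact_mod_cast hn
  have hd' : (d : ℚ) ≠ 0 := by exact_mod_cast hd.ne'
  have hD' : (D : ℚ) ≠ 0 := by exact_mod_cast hD.ne'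
  have e : N * n = -12 * d * D := by
    rw [hXe] at hYe
    field_simp at hYe
    have : (N * n : ℚ) = -12 * d * D := by linarith
    exact_mod_cast this
  have h1 : N ∣ 12 * d := hC.dvd_of_dvd_mul_right (show N ∣ (12 * d) * D from ⟨-n, by linarith⟩)
  have h2 : D ∣ n := hC.symm.dvd_of_dvd_mul_left (show D ∣ N * n from ⟨-12 * d, by linarith⟩)
  have h3 : |N| ≤ 12 * d := Int.le_of_dvd (by positivity) ((abs_dvd _ _).2 h1)
  have h4 : D ≤ |n| := Int.le_of_dvd (by positivity) ((dvd_abs _ _).2 h2)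
  rw [hh, hH]
  apply max_le
  · linarith [le_max_right |n| d]
  · have := le_max_left |n| d
    have : 0 ≤ |n| := abs_nonneg n
    linarith

theorem odd_sq_mod8 {d : ℤ} (h : Odd d) : d ^ 2 % 8 = 1 := by
  rw [Int.odd_iff] at h
  have : d % 8 = 1 ∨ d % 8 = 3 ∨ d % 8 = 5 ∨ d % 8 = 7 := by omega
  rcases this with h | h | h | h <;> simp [pow_two, Int.mul_emod, h]

theorem gcd_bound (n d g : ℤ) (hc : IsCoprime n d) (hA : g ∣ (n ^ 2 + 12 * d ^ 2) ^ 2)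
    (hB : g ∣ 4 * n * d * (n ^ 2 + 12 * n * d - 12 * d ^ 2)) : |g| ≤ 2304 := by
  have hgd : IsCoprime g d := by
    have h1 : IsCoprime ((n ^ 2 + 12 * d ^ 2) ^ 2) d := by
      apply IsCoprime.pow_left
      have h3 := (hc.pow_left (m := 2)).add_mul_right_left (12 * d)
      have h4 : n ^ 2 + 12 * d ^ 2 = n ^ 2 + 12 * d * d := by ring
      rw [h4]; exact h3
    exact h1.of_isCoprime_of_dvd_left hA
  have hB' : g ∣ 4 * n * (n ^ 2 + 12 * n * d - 12 * d ^ 2) :=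
    hgd.dvd_of_dvd_mul_left (show g ∣ d * _ by convert hB using 1; ring)
  have h36 : g ∣ 36864 * d ^ 6 := by
    have e : 36864 * d ^ 6 = (n ^ 2 + 12 * d ^ 2) ^ 2 * (256 * d ^ 2 - 32 * n * d - 4 * n ^ 2)
      + 4 * n * (n ^ 2 + 12 * n * d - 12 * d ^ 2) * (-96 * d ^ 3 + 20 * n * d ^ 2 - 4 * n ^ 2 * d + n ^ 3) := by
      ring
    rw [e]
    exact dvd_add (hA.mul_right _) (hB'.mul_right _)
  have h36' : g ∣ 36864 := hgd.pow_right.dvd_of_dvd_mul_right h36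
  have h512 : ¬ (512 : ℤ) ∣ g := by
    intro h
    have h1 : (512 : ℤ) ∣ (n ^ 2 + 12 * d ^ 2) ^ 2 := h.trans hA
    obtain ⟨c, hc1⟩ := h1
    obtain ⟨n1, rfl⟩ : ∃ n1, n = 2 * n1 := by
      obtain ⟨a, ha⟩ := sq_even (N := n ^ 2 + 12 * d ^ 2) (k := 256 * c) (by linarith)
      exact sq_even (N := n) (k := a - 6 * d ^ 2) (by linarith)
    have hd : Odd d := by
      rw [← Int.not_even_iff_odd]
      intro he
      exact not_both 2 _ d (by norm_num) hc (by simp) he.two_dvd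
    have hc2 : (n1 ^ 2 + 3 * d ^ 2) ^ 2 = 32 * c := by nlinarith
    have hd8 : d ^ 2 % 8 = 1 := odd_sq_mod8 hd
    rcases Int.even_or_odd n1 with h2 | h2
    · obtain ⟨m, rfl⟩ := h2
      obtain ⟨a, ha⟩ := sq_even (N := (m + m) ^ 2 + 3 * d ^ 2) (k := 16 * c) (by linarith)
      have : (m + m) ^ 2 = 4 * m ^ 2 := by ring
      omega
    · have h8 : n1 ^ 2 % 8 = 1 := odd_sq_mod8 h2
      obtain ⟨r, hr⟩ : ∃ r, n1 ^ 2 + 3 * d ^ 2 = 4 * r ∧ r % 2 = 1 :=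
        ⟨(n1 ^ 2 + 3 * d ^ 2) / 4, by omega, by omega⟩
      rw [hr.1] at hc2
      obtain ⟨a, ha⟩ := sq_even (N := r) (k := c) (by linarith)
      omega
  have hN : g.natAbs ∣ 2 ^ 12 * 9 := by
    simpa using Int.natAbs_dvd_natAbs.2 h36'
  obtain ⟨u, v, hu, hv, huv⟩ := (Nat.dvd_mul).1 hN
  obtain ⟨i, -, rfl⟩ := (Nat.dvd_prime_pow Nat.prime_two).1 hu
  have hv9 : v ≤ 9 := Nat.le_of_dvd (by norm_num) hv
  have hi : i ≤ 8 := by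
    by_contra hi
    apply h512
    have h9 : 2 ^ 9 ∣ 2 ^ i := pow_dvd_pow 2 (by omega)
    have h10 : 512 ∣ g.natAbs := by
      rw [← huv]; exact (show 512 ∣ 2 ^ i by simpa using h9).mul_right v
    exact Int.natCast_dvd.2 h10
  have h2i : 2 ^ i ≤ 2 ^ 8 := Nat.pow_le_pow_right (by norm_num) hi
  have hle : g.natAbs ≤ 2304 := by
    rw [← huv]
    calc 2 ^ i * v ≤ 2 ^ 8 * 9 := Nat.mul_le_mul h2i hv9
      _ = 2304 := by norm_num
  rw [Int.abs_eq_natAbs]; exact_mod_cast hle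

/-- Doubling. -/
theorem ht_dbl (X y : ℚ) (hy : y ≠ 0) (hX : X ≠ 0) (h : y ^ 2 = X * (X ^ 2 + 12 * X - 12)) :
    ht X ^ 4 ≤ 2304 * ht (((X ^ 2 + 12) / (2 * y)) ^ 2) := by
  obtain ⟨n, d, hd, hc, hXe, hh⟩ := ht_spec X
  obtain ⟨N, D, hD, hC, hYe, hH⟩ := ht_spec (((X ^ 2 + 12) / (2 * y)) ^ 2)
  have hn : n ≠ 0 := by rintro rfl; apply hX; rw [hXe]; simp
  have hn' : (n : ℚ) ≠ 0 := by exact_mod_cast hn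
  have hd' : (d : ℚ) ≠ 0 := by exact_mod_cast hd.ne'
  have hD' : (D : ℚ) ≠ 0 := by exact_mod_cast hD.ne'
  have e : (n ^ 2 + 12 * d ^ 2) ^ 2 * D = 4 * n * d * (n ^ 2 + 12 * n * d - 12 * d ^ 2) * N := by
    have hy2 : y ^ 2 * d ^ 3 = n * (n ^ 2 + 12 * n * d - 12 * d ^ 2) := by
      rw [h, hXe]; field_simp
    rw [hXe] at hYe
    field_simp at hYe
    have : ((n ^ 2 + 12 * d ^ 2) ^ 2 * D : ℚ) = 4 * n * d * (n ^ 2 + 12 * n * d - 12 * d ^ 2) * N := by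
      linear_combination hYe + 4 * d * N * hy2
    exact_mod_cast this
  obtain ⟨g, hg⟩ : N ∣ (n ^ 2 + 12 * d ^ 2) ^ 2 := hC.dvd_of_dvd_mul_right ⟨_, e.trans (mul_comm _ _)⟩
  have hApos : 0 < (n ^ 2 + 12 * d ^ 2) ^ 2 := by positivity
  have hN : N ≠ 0 := by rintro rfl; rw [hg] at hApos; simp at hApos
  have hB : 4 * n * d * (n ^ 2 + 12 * n * d - 12 * d ^ 2) = D * g := by
    apply mul_right_cancel₀ hN
    rw [← e, hg]; ring
  have hgb := gcd_bound n d g hc ⟨N, by rw [hg]; ring⟩ ⟨D, by rw [hB]; ring⟩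
  have h1 : (n ^ 2 + 12 * d ^ 2) ^ 2 ≤ 2304 * |N| := by
    have : (n ^ 2 + 12 * d ^ 2) ^ 2 = |N| * |g| := by rw [← abs_mul, ← hg, abs_of_pos hApos]
    rw [this]
    nlinarith [abs_nonneg N]
  have h2 : (max |n| d) ^ 2 ≤ n ^ 2 + 12 * d ^ 2 := by
    rcases max_choice |n| d with h | h <;> rw [h]
    · rw [sq_abs]; nlinarith [sq_nonneg d]
    · nlinarith [sq_nonneg n, sq_nonneg d]
  rw [hh, hH]
  calc (max |n| d) ^ 4 = ((max |n| d) ^ 2) ^ 2 := by ring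
    _ ≤ (n ^ 2 + 12 * d ^ 2) ^ 2 := by gcongr
    _ ≤ 2304 * |N| := h1
    _ ≤ _ := by linarith [le_max_left |N| D]

/-- Heights of the two roots of a quadratic. -/
theorem ht_quad (a b c K : ℤ) (ha : a ≠ 0) (X Y : ℚ) (hX : 0 ≤ X) (hY : 0 ≤ Y)
    (h1 : a * (X + Y) = b) (h2 : a * (X * Y) = c) (ka : |a| ≤ K) (kb : |b| ≤ K) (kc : |c| ≤ K) :
    ht X * ht Y ≤ K := by
  obtain ⟨n, d, hd, hc, hXe, hh⟩ := ht_spec X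
  obtain ⟨m, e, he, hc', hYe, hh'⟩ := ht_spec Y
  have hd' : (0 : ℚ) < d := by exact_mod_cast hd
  have he' : (0 : ℚ) < e := by exact_mod_cast he
  have hn : 0 ≤ n := by
    have : (0 : ℚ) ≤ n := by
      have : (n : ℚ) = X * d := by rw [hXe]; field_simp
      rw [this]; positivity
    exact_mod_cast this
  have hm : 0 ≤ m := by
    have : (0 : ℚ) ≤ m := by
      have : (m : ℚ) = Y * e := by rw [hYe]; field_simp
      rw [this]; positivity
    exact_mod_cast this
  have q1 : a * (n * e + m * d) = b * (d * e) := by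
    rw [hXe, hYe] at h1
    field_simp at h1
    have : (a * (n * e + m * d) : ℚ) = b * (d * e) := by linear_combination h1
    exact_mod_cast this
  have q2 : a * (n * m) = c * (d * e) := by
    rw [hXe, hYe] at h2
    field_simp at h2
    have : (a * (n * m) : ℚ) = c * (d * e) := by linear_combination h2
    exact_mod_cast this
  have hdiv : d * e ∣ a := by
    obtain ⟨v, u, huv⟩ := hc
    obtain ⟨v', u', huv'⟩ := hc'
    have hone : u * u' * (d * e) + u * v' * (d * m) + v * u' * (n * e) + v * v' * (n * m) = 1 := by
      have : (v * n + u * d) * (v' * m + u' * e) = 1 := by rw [huv, huv']; ring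
      linear_combination this
    have s1 : d * e ∣ a * (n * m) := ⟨c, by rw [q2]; ring⟩
    have s2 : d * e ∣ a * (n * e + m * d) := ⟨b, by rw [q1]; ring⟩
    have s3 : d * e ∣ a * (d * e) := ⟨a, by ring⟩
    have r1 : d * e ∣ a - a * (u * v' - v * u') * (d * m) := by
      have : a - a * (u * v' - v * u') * (d * m) = u * u' * (a * (d * e)) + v * v' * (a * (n * m))
          + v * u' * (a * (n * e + m * d)) := by linear_combination -a * hone
      rw [this]
      exact dvd_add (dvd_add (s3.mul_left _) (s1.mul_left _)) (s2.mul_left _)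
    have r2 : d * e ∣ a * (d * m) * (d * m) := by
      have : a * (d * m) * (d * m) = (d * m) * (a * (n * e + m * d)) - (n * m) * (a * (d * e)) := by ring
      rw [this]
      exact dvd_sub (s2.mul_left _) (s3.mul_left _)
    have : a = (a - a * (u * v' - v * u') * (d * m)) * (1 + (u * v' - v * u') * (d * m))
        + (u * v' - v * u') ^ 2 * (a * (d * m) * (d * m)) := by ring
    rw [this]
    exact dvd_add (r1.mul_right _) (r2.mul_left _)
  obtain ⟨k, hk⟩ := hdiv
  have hk0 : k ≠ 0 := by rintro rfl; apply ha; rw [hk]; ring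
  have hkpos : 1 ≤ |k| := Int.one_le_abs hk0
  have hde : d * e ≠ 0 := (mul_pos hd he).ne'
  have eb : b = k * (n * e + m * d) := mul_right_cancel₀ hde (by rw [← q1, hk]; ring)
  have ec : c = k * (n * m) := mul_right_cancel₀ hde (by rw [← q2, hk]; ring)
  have p1 : 0 ≤ n * e := by positivity
  have p2 : 0 ≤ m * d := by positivity
  have p3 : 0 ≤ n * m := by positivity
  have p4 : 0 ≤ d * e := by positivity
  have ba : d * e ≤ K := by
    rw [hk, abs_mul, abs_of_nonneg p4] at ka; nlinarith
  have bb : n * e + m * d ≤ K := by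
    rw [eb, abs_mul, abs_of_nonneg (add_nonneg p1 p2)] at kb; nlinarith
  have bc : n * m ≤ K := by
    rw [ec, abs_mul, abs_of_nonneg p3] at kc; nlinarith
  rw [hh, hh', abs_of_nonneg hn, abs_of_nonneg hm]
  rcases max_choice n d with h | h <;> rcases max_choice m e with h' | h' <;> rw [h, h'] <;> linarith

theorem ht_min (X Y Z : ℚ) (h : ht X * ht Y ≤ 492 * ht Z ^ 2) : ht X ≤ 23 * ht Z ∨ ht Y ≤ 23 * ht Z := by
  by_contra hcon
  push Not at hcon
  have := ht_pos Z
  nlinarith [hcon.1, hcon.2]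

theorem small_search : ∀ n ∈ Finset.Icc (-37 : ℤ) 37, ∀ d ∈ ([1, 4, 9, 16, 25, 36] : List ℤ), Int.gcd n d = 1 →
    IsSquare ((n * d) * (n ^ 2 + 12 * n * d - 12 * d ^ 2)) →
      d = 1 ∧ (n = 0 ∨ n = -2 ∨ n = 6 ∨ n = 1 ∨ n = -12) := by
  decide +kernel

theorem small_pts (X y : ℚ) (h : y ^ 2 = X * (X ^ 2 + 12 * X - 12)) (hh : ht X ≤ 37) :
    X = 0 ∨ X = -2 ∨ X = 6 ∨ X = 1 ∨ X = -12 := by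
  obtain ⟨n, d, hd, hc, hXe, hh'⟩ := ht_spec X
  have hd' : (d : ℚ) ≠ 0 := by exact_mod_cast hd.ne'
  have h1 : (y * d ^ 2) ^ 2 = ((n * d) * (n ^ 2 + 12 * n * d - 12 * d ^ 2) : ℤ) := by
    rw [mul_pow, h, hXe]; push_cast; field_simp
  obtain ⟨M, hM⟩ := int_of_sq _ _ h1
  rw [hM] at h1
  have h2 : (n * d) * (n ^ 2 + 12 * n * d - 12 * d ^ 2) = M ^ 2 := by exact_mod_cast h1.symm
  rw [hh'] at hh
  have hn := abs_le.1 ((le_max_left _ _).trans hh)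
  have hd37 := (le_max_right _ _).trans hh
  have hcd : IsCoprime d (n * (n ^ 2 + 12 * n * d - 12 * d ^ 2)) := by
    have h3 : IsCoprime d (n ^ 3 + d * (12 * n ^ 2 - 12 * n * d)) :=
      (hc.symm.pow_right (n := 3)).add_mul_left_right _
    have h4 : n * (n ^ 2 + 12 * n * d - 12 * d ^ 2) = n ^ 3 + d * (12 * n ^ 2 - 12 * n * d) := by ring
    rw [h4]; exact h3
  have hdm : d ∈ ([1, 4, 9, 16, 25, 36] : List ℤ) := by
    obtain ⟨r, hr | hr⟩ := Int.sq_of_isCoprime hcd (c := M) (by rw [← h2]; ring)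
    · have r1 : r ≤ 6 := by nlinarith
      have r2 : -6 ≤ r := by nlinarith
      rw [hr] at hd ⊢
      interval_cases r <;> simp at hd ⊢
    · nlinarith [sq_nonneg r]
  obtain ⟨rfl, hn⟩ := small_search n (Finset.mem_Icc.2 hn) d hdm
    (Int.isCoprime_iff_gcd_eq_one.1 hc) ⟨M, by rw [h2]; ring⟩
  rw [hXe]
  rcases hn with rfl | rfl | rfl | rfl | rfl <;> norm_num

theorem sub_add_ht (X y x0 y0 X3 X4 m3 m4 : ℚ) (z : ℤ) (hz : x0 = z) (hz' : z = -2 ∨ z = 6)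
    (h : y ^ 2 = X * (X ^ 2 + 12 * X - 12)) (h0 : y0 ^ 2 = x0 * (x0 ^ 2 + 12 * x0 - 12))
    (hne : X ≠ x0) (hm3 : m3 * (X - x0) = y - y0) (hm4 : m4 * (X - x0) = y - -y0)
    (h3 : X3 = m3 ^ 2 - 12 - X - x0) (h4 : X4 = m4 ^ 2 - 12 - X - x0) (p3 : 0 ≤ X3) (p4 : 0 ≤ X4) :
    ht X3 * ht X4 ≤ 492 * ht X ^ 2 := by
  have hδ : (X - x0) ^ 2 ≠ 0 := pow_ne_zero 2 (sub_ne_zero.2 hne)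
  have k3 : (X - x0) ^ 2 * X3 = (y - y0) ^ 2 - (12 + X + x0) * (X - x0) ^ 2 := by
    rw [h3, ← hm3]; ring
  have k4 : (X - x0) ^ 2 * X4 = (y + y0) ^ 2 - (12 + X + x0) * (X - x0) ^ 2 := by
    rw [h4, ← sub_neg_eq_add y y0, ← hm4]; ring
  have hs : (X - x0) ^ 2 * (X3 + X4) = 2 * ((X * x0 - 12) * (X + x0) + 24 * X * x0) := by
    linear_combination k3 + k4 + 2 * h + 2 * h0
  have hp : (X - x0) ^ 2 * (X3 * X4) = (X * x0 + 12) ^ 2 := by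
    apply mul_left_cancel₀ hδ
    have : (X - x0) ^ 2 * ((X - x0) ^ 2 * (X3 * X4)) = ((X - x0) ^ 2 * X3) * ((X - x0) ^ 2 * X4) := by
      ring
    rw [this, k3, k4]
    linear_combination
      (y ^ 2 + X * (X ^ 2 + 12 * X - 12) - 2 * y0 ^ 2 - 2 * ((12 + X + x0) * (X - x0) ^ 2)) * h
      + (y0 ^ 2 + x0 * (x0 ^ 2 + 12 * x0 - 12) - 2 * (X * (X ^ 2 + 12 * X - 12))
        - 2 * ((12 + X + x0) * (X - x0) ^ 2)) * h0
  obtain ⟨n, d, hd, hc, hXe, hh⟩ := ht_spec X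
  have hd' : (d : ℚ) ≠ 0 := by exact_mod_cast hd.ne'
  have hn : (n : ℚ) = X * d := by rw [hXe]; field_simp
  have b1 : |n| ≤ ht X := by rw [hh]; exact le_max_left _ _
  have b2 : d ≤ ht X := by rw [hh]; exact le_max_right _ _
  have hpos := ht_pos X
  set H := ht X with hH
  have hne0 : n - z * d ≠ 0 := by
    intro hc
    have : (n : ℚ) - z * d = 0 := by exact_mod_cast hc
    apply hne
    rw [hn, ← hz] at this
    have : (X - x0) * d = 0 := by linarith
    rcases mul_eq_zero.1 this with h | h
    · linarith
    · exact absurd h hd'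
  obtain ⟨b3, b4⟩ := abs_le.1 b1
  have c1 : n ^ 2 ≤ H ^ 2 := by nlinarith
  have c2 : d ^ 2 ≤ H ^ 2 := by nlinarith
  have c3 : n * d ≤ H ^ 2 := by nlinarith
  have c4 : -H ^ 2 ≤ n * d := by nlinarith
  have c5 : 0 ≤ n ^ 2 := sq_nonneg n
  have c6 : 0 ≤ d ^ 2 := sq_nonneg d
  refine ht_quad ((n - z * d) ^ 2) (2 * ((n * z - 12 * d) * (n + z * d) + 24 * n * z * d))
    ((n * z + 12 * d) ^ 2) _ (pow_ne_zero 2 hne0) X3 X4 p3 p4 ?_ ?_ ?_ ?_ ?_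
  · push_cast; rw [hn, ← hz]; linear_combination d ^ 2 * hs
  · push_cast; rw [hn, ← hz]; linear_combination d ^ 2 * hp
  all_goals rw [abs_le]; rcases hz' with rfl | rfl <;> constructor <;> linarith

theorem dbl_sq {R : E576e2.Point} {X y : ℚ} (h : IsPt (R + R) X y) : ∃ s, X = s ^ 2 := by
  rcases pt_cases R with rfl | ⟨X', y', hR⟩
  · exact absurd (add_zero 0) h.ne_zero
  · exact ⟨_, (dbl_X hR h).2.2⟩

theorem step_aux (S : AddSubgroup E576e2.Point) (Q R P : E576e2.Point) (X y x0 y0 : ℚ) (z : ℤ)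
    (hz : x0 = z) (hz' : z = -2 ∨ z = 6) (hP : IsPt P x0 y0) (hPS : P ∈ S)
    (hQ : IsPt Q X y) (hQS : Q ∉ S) (h : Q = R + R + P) :
    ∃ R X' y', IsPt (R + R) X' y' ∧ R ∉ S ∧ ht X' ≤ 23 * ht X := by
  have hne : X ≠ x0 := by
    rintro rfl
    rcases hQ.eq_or_neg hP with rfl | rfl
    · exact hQS hPS
    · exact hQS (S.neg_mem hPS)
  have hRS : R ∉ S := fun hR => hQS (h ▸ S.add_mem (S.add_mem hR hR) hPS)
  have hRS' : R + P ∉ S := fun hR => hRS (by simpa using S.sub_mem hR hPS)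
  have hδ : X - x0 ≠ 0 := sub_ne_zero.2 hne
  have m3 : (y - y0) / (X - x0) * (X - x0) = y - y0 := by field_simp
  have m4 : (y - -y0) / (X - x0) * (X - x0) = y - -y0 := by field_simp
  have a3 := hQ.add hP hne m3
  have a4 := hQ.add hP.neg hne m4
  have e3 : Q + P = (R + P) + (R + P) := by rw [h]; abel
  have e4 : Q + -P = R + R := by rw [h]; abel
  rw [e3] at a3
  rw [e4] at a4
  obtain ⟨s3, hs3⟩ := dbl_sq a3
  obtain ⟨s4, hs4⟩ := dbl_sq a4
  have := sub_add_ht X y x0 y0 _ _ _ _ z hz hz' hQ.eqn hP.eqn hne m3 m4 rfl rfl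
    (by rw [hs3]; positivity) (by rw [hs4]; positivity)
  rcases ht_min _ _ _ this with hh | hh
  · exact ⟨_, _, _, a3, hRS', hh⟩
  · exact ⟨_, _, _, a4, hRS, hh⟩

theorem step (S : AddSubgroup E576e2.Point) (hTS : T ∈ S) (hGS : G ∈ S) (Q : E576e2.Point) (X y : ℚ)
    (hQ : IsPt Q X y) (hQS : Q ∉ S) :
    ∃ R X' y', IsPt (R + R) X' y' ∧ R ∉ S ∧ ht X' ≤ 23 * ht X := by
  have hpos := ht_pos X
  obtain ⟨R, h | h | h | h⟩ := weak_MW Q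
  · refine ⟨R, X, y, h ▸ hQ, fun hR => hQS (h ▸ S.add_mem hR hR), by linarith⟩
  · have hX : X ≠ 0 := by
      rintro rfl
      rcases hQ.eq_or_neg hT with rfl | rfl
      · exact hQS hTS
      · exact hQS (S.neg_mem hTS)
    obtain ⟨y', hy'⟩ := hQ.addT hX
    have e : Q + T = R + R := by rw [h, add_assoc, TT, add_zero]
    rw [e] at hy'
    exact ⟨R, _, _, hy', fun hR => hQS (h ▸ S.add_mem (S.add_mem hR hR) hTS),
      by linarith [ht_inv X hX]⟩
  · exact step_aux S Q R G X y (-2) 8 (-2) (by norm_num) (by norm_num) hG hGS hQ hQS h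
  · exact step_aux S Q R (G + T) X y 6 24 6 (by norm_num) (by norm_num) hGT (S.add_mem hGS hTS) hQ hQS h

theorem all_mem (S : AddSubgroup E576e2.Point) (hTS : T ∈ S) (hGS : G ∈ S) (Q : E576e2.Point) : Q ∈ S := by
  have key : ∀ k : ℕ, ∀ Q X y, IsPt Q X y → ht X ≤ k → Q ∈ S := by
    intro k
    induction k using Nat.strong_induction_on with
    | _ k ih =>
      intro Q X y hQ hk
      by_contra hQS
      obtain ⟨R, X', y', hRR, hRS, hh⟩ := step S hTS hGS Q X y hQ hQS
      rcases pt_cases R with rfl | ⟨XR, yR, hR⟩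
      · exact hRS S.zero_mem
      obtain ⟨hy0, hX0, hX'⟩ := dbl_X hR hRR
      have hd := ht_dbl XR yR hy0 hX0 hR.eqn
      rw [← hX'] at hd
      have p1 := ht_pos X
      have p2 := ht_pos XR
      by_cases hlt : ht XR < ht X
      · apply hRS
        refine ih (ht XR).toNat ?_ R XR yR hR ?_
        · omega
        · omega
      · push Not at hlt
        have h37 : ht X ≤ 37 := by
          by_contra hc
          push Not at hc
          have h4 : ht X ^ 4 ≤ ht XR ^ 4 := by gcongr
          have h38 : (38 : ℤ) ^ 3 ≤ ht X ^ 3 := by gcongr; linarith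
          have : ht X * ht X ^ 3 ≤ ht X * 52992 := by nlinarith
          have := le_of_mul_le_mul_left this (by linarith)
          linarith
        have hGTS : G + T ∈ S := S.add_mem hGS hTS
        have hGGS : G + G ∈ S := S.add_mem hGS hGS
        have fin : ∀ P y', P ∈ S → IsPt P X y' → False := by
          intro P y' hP hPX
          rcases hQ.eq_or_neg hPX with rfl | rfl
          · exact hQS hP
          · exact hQS (S.neg_mem hP)
        rcases small_pts X y hQ.eqn h37 with rfl | rfl | rfl | rfl | rfl
        · exact fin _ _ hTS hT
        · exact fin _ _ hGS hG
        · exact fin _ _ hGTS hGT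
        · exact fin _ _ hGGS hGG
        · obtain ⟨y', hy'⟩ := hGG.addT (by norm_num)
          rw [show (-12 : ℚ) / 1 = -12 by norm_num] at hy'
          exact fin _ _ (S.add_mem hGGS hTS) hy'
  rcases pt_cases Q with rfl | ⟨X, y, hQ⟩
  · exact S.zero_mem
  · exact key (ht X).toNat Q X y hQ (by omega)

theorem T_ne_dbl (R : E576e2.Point) : R + R ≠ T := by
  intro h
  have h' := hT
  rw [← h] at h'
  rcases pt_cases R with rfl | ⟨X, y, hR⟩
  · exact h'.ne_zero (add_zero 0)
  obtain ⟨hy, -, h1⟩ := dbl_X hR h'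
  have : (X ^ 2 + 12) / (2 * y) ≠ 0 := div_ne_zero (by positivity) (by positivity)
  exact pow_ne_zero 2 this h1.symm

theorem G_ne_dbl (R : E576e2.Point) : R + R ≠ G := by
  intro h
  have h' := hG
  rw [← h] at h'
  obtain ⟨s, hs⟩ := dbl_sq h'
  nlinarith [sq_nonneg s]

theorem GT_ne_dbl (R : E576e2.Point) : R + R ≠ G + T := by
  intro h
  have h' := hGT
  rw [← h] at h'
  obtain ⟨s, hs⟩ := dbl_sq h'
  obtain ⟨N, hN⟩ := int_of_sq s 6 (by rw [← hs]; norm_num)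
  rw [hN] at hs
  have h2 : (6 : ℤ) = N ^ 2 := by exact_mod_cast hs
  have h3 : N ≤ 2 := by nlinarith
  have h4 : -2 ≤ N := by nlinarith
  interval_cases N <;> omega

theorem indep : ∀ k : ℕ, ∀ m : ℤ, m.natAbs ≤ k → (m • G = 0 → m = 0) ∧ m • G ≠ T := by
  intro k
  induction k using Nat.strong_induction_on with
  | _ k ih =>
    intro m hm
    rcases Int.even_or_odd' m with ⟨l, rfl | rfl⟩
    · have e : (2 * l) • G = l • G + l • G := by rw [two_mul, add_zsmul]
      rw [e]
      refine ⟨fun h => ?_, T_ne_dbl _⟩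
      by_contra hne
      have hl : l.natAbs < k := by omega
      obtain ⟨i1, i2⟩ := ih _ hl l le_rfl
      rcases two_tors h with h | h
      · exact hne (by rw [i1 h]; rfl)
      · exact i2 h
    · have e : (2 * l + 1) • G = l • G + l • G + G := by rw [add_zsmul, two_mul, add_zsmul, one_zsmul]
      rw [e]
      refine ⟨fun h => ?_, fun h => ?_⟩
      · exfalso
        apply G_ne_dbl (-(l • G))
        rw [← sub_eq_zero, ← neg_eq_zero, ← h]; abel
      · apply GT_ne_dbl (l • G + G)
        rw [← h]; abel

noncomputable def theHom : ℤ × ZMod 2 →+ E576e2.Point :=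
  AddMonoidHom.coprod (zmultiplesHom _ G)
    (ZMod.lift 2 ⟨zmultiplesHom _ T, by
      change (2 : ℤ) • T = 0
      rw [two_zsmul, TT]⟩)

theorem theHom_apply (m l : ℤ) : theHom (m, (l : ZMod 2)) = m • G + l • T := by
  simp [theHom]

/-- The Mordell–Weil group `E(ℚ)` of the elliptic curve
`y² = x³ − 60x + 176` over `ℚ` (LMFDB 576.e2) is isomorphic as an abelian group to
`ℤ × ℤ/2ℤ`. -/
theorem mordellWeil_576e2 : Nonempty (E576e2.Point ≃+ ℤ × ZMod 2) := by
  refine ⟨(AddEquiv.ofBijective theHom ⟨?_, ?_⟩).symm⟩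
  · rw [injective_iff_map_eq_zero]
    rintro ⟨m, j⟩ h
    have hj : j = 0 ∨ j = 1 := (by decide : ∀ j : ZMod 2, j = 0 ∨ j = 1) j
    rcases hj with rfl | rfl
    · have := theHom_apply m 0
      rw [Int.cast_zero, h, zero_zsmul, add_zero] at this
      rw [(indep _ m le_rfl).1 this.symm]
      rfl
    · exfalso
      have := theHom_apply m 1
      rw [Int.cast_one, h, one_zsmul] at this
      apply (indep _ m le_rfl).2
      have h2 : m • G = -T := eq_neg_of_add_eq_zero_left this.symm
      rw [h2, neg_eq_iff_add_eq_zero, TT]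
  · intro Q
    have := all_mem theHom.range ⟨(0, ((1 : ℤ) : ZMod 2)), by rw [theHom_apply]; simp⟩
      ⟨(1, ((0 : ℤ) : ZMod 2)), by rw [theHom_apply]; simp⟩ Q
    exact this
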